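/- Let a, b, c be integers and let R = ℚ[y_1,y_2,y_3]/(y_1², y_2(a y_1 + y_2), y_3(b y_1 + c y_2 + y_3)). Then there exists a ℚ-algebra isomorphism ℚ[x_1,x_2,x_3]/(x_1², x_2², x_3²) → R mapping the ℚ-span of {x̄_1, x̄_2, x̄_3} onto the ℚ-span of {ȳ_1, ȳ_2, ȳ_3} if and only if c(2b − ac) = 0. -/

import Mathlib

/-!
A graded isomorphism between quotients of a polynomial ring by ideals without terms of degree
less than two lifts to an invertible linear change of variables, so such an isomorphism from
`K[x] / (xᵢ²)` to the Bott ring `R` exists only if `R` has a basis of linear forms with square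
zero. Comparing coefficients, `p y₁ + q y₂ + r y₃` squares to zero in `R` if and only if
`2pq = aq²`, `2pr = br²` and `2qr = cr²`, and these equations give `r⁴ c(2b - ac) = 0`.
The coefficients `r` of a basis generate the unit ideal, whence `c(2b - ac) = 0`. Conversely, if
this holds, then `y₁`, `(a/2) y₁ + y₂` and `(b/2) y₁ + (c/2) y₂ + y₃` square to zero, and their
squares generate the ideal of relations.
-/

open MvPolynomial

/-- The ideal `(y₁², y₂(a y₁ + y₂), y₃(b y₁ + c y₂ + y₃))` of `ℚ[y₁,y₂,y₃]` (with
`yᵢ = X (i-1)`), defining the rational cohomology ring of the 3-stage Bott manifold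
with twisting data `(a, b, c)`. -/
noncomputable def bott3Ideal (a b c : ℤ) : Ideal (MvPolynomial (Fin 3) ℚ) :=
  Ideal.span {X 0 ^ 2, X 1 * (C (a : ℚ) * X 0 + X 1),
    X 2 * (C (b : ℚ) * X 0 + C (c : ℚ) * X 1 + X 2)}

/-- The ideal `(x₁², x₂², x₃²)` of `ℚ[x₁,x₂,x₃]`, defining the rational cohomology ring
of `(ℂP¹)³`. -/
noncomputable def cubeIdeal : Ideal (MvPolynomial (Fin 3) ℚ) :=
  Ideal.span (Set.range fun i => X i ^ 2)

section LinearForms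

variable {K m n o : Type*} [CommRing K] [Fintype n] [Fintype o]

lemma toMvPolynomial_eq_sum_smul_X (M : Matrix m n K) (i : m) :
    M.toMvPolynomial i = ∑ j, M i j • X j := by
  simp only [Matrix.toMvPolynomial, ← C_mul_X_eq_monomial, smul_eq_C_mul]

lemma toMvPolynomial_mul_eq_sum_smul (M : Matrix m n K) (N : Matrix n o K) (i : m) :
    (M * N).toMvPolynomial i = ∑ j, M i j • N.toMvPolynomial j := by
  simp only [Matrix.toMvPolynomial_mul, toMvPolynomial_eq_sum_smul_X M, map_sum, map_smul,
    bind₁_X_right]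

lemma coeff_single_toMvPolynomial (M : Matrix m n K) (i : m) (j : n) :
    coeff (Finsupp.single j 1) (M.toMvPolynomial i) = M i j := by
  classical
  simp [Matrix.toMvPolynomial, coeff_sum, coeff_monomial, Finsupp.single_left_inj]

/-- The linear change of variables `X i ↦ ∑ j, M i j • X j`, as an automorphism of the polynomial
ring. -/
noncomputable def linearSubst [DecidableEq n] (M : GL n K) :
    MvPolynomial n K ≃ₐ[K] MvPolynomial n K :=
  AlgEquiv.ofAlgHom (bind₁ M.val.toMvPolynomial) (bind₁ M⁻¹.val.toMvPolynomial)
    (algHom_ext fun i => by simp [← Matrix.toMvPolynomial_mul])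
    (algHom_ext fun i => by simp [← Matrix.toMvPolynomial_mul])

lemma linearSubst_X [DecidableEq n] (M : GL n K) (i : n) :
    linearSubst M (X i) = M.val.toMvPolynomial i :=
  bind₁_X_right _ i

end LinearForms

section GradedQuotients

variable {K m n : Type*} [CommRing K]

/-- The degree-one part of the quotient `K[X] / I`: the span of the classes of the variables. -/
noncomputable def linearForms (I : Ideal (MvPolynomial n K)) : Submodule K (MvPolynomial n K ⧸ I) :=
  Submodule.span K (Set.range fun i => Ideal.Quotient.mk I (X i))

variable [Fintype n] {I J : Ideal (MvPolynomial n K)}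

lemma mk_toMvPolynomial (I : Ideal (MvPolynomial n K)) (M : Matrix m n K) (i : m) :
    Ideal.Quotient.mk I (M.toMvPolynomial i) = ∑ j, M i j • Ideal.Quotient.mk I (X j) := by
  simp only [toMvPolynomial_eq_sum_smul_X, ← Ideal.Quotient.mkₐ_eq_mk K, map_sum, map_smul]

lemma forall_mem_linearForms_iff {f : m → MvPolynomial n K ⧸ I} :
    (∀ i, f i ∈ linearForms I) ↔
      ∃ M : Matrix m n K, ∀ i, f i = Ideal.Quotient.mk I (M.toMvPolynomial i) := by
  simp only [linearForms, Submodule.mem_span_range_iff_exists_fun, mk_toMvPolynomial]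
  exact ⟨fun h => ⟨fun i => (h i).choose, fun i => (h i).choose_spec.symm⟩,
    fun ⟨M, hM⟩ i => ⟨M i, (hM i).symm⟩⟩

lemma matrix_eq_of_mk_toMvPolynomial_eq (hI : I ≤ idealOfVars n K ^ 2) {M N : Matrix m n K}
    (h : ∀ i, Ideal.Quotient.mk I (M.toMvPolynomial i) =
      Ideal.Quotient.mk I (N.toMvPolynomial i)) : M = N := by
  ext i j
  have hcoeff := (mem_pow_idealOfVars_iff' 2 _).mp (hI (Ideal.Quotient.eq.mp (h i)))
    (Finsupp.single j 1) (by simp)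
  rwa [coeff_sub, coeff_single_toMvPolynomial, coeff_single_toMvPolynomial, sub_eq_zero] at hcoeff

variable [DecidableEq n]

lemma span_range_mk_toMvPolynomial (I : Ideal (MvPolynomial n K)) (M : GL n K) :
    Submodule.span K (Set.range fun i => Ideal.Quotient.mk I (M.val.toMvPolynomial i)) =
      linearForms I := by
  refine le_antisymm (Submodule.span_le.mpr ?_) (Submodule.span_le.mpr ?_)
  · rintro _ ⟨i, rfl⟩
    exact forall_mem_linearForms_iff.mpr ⟨M.val, fun _ => rfl⟩ i
  · rintro _ ⟨i, rfl⟩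
    have hX : (X i : MvPolynomial n K) = ∑ j, M⁻¹.val i j • M.val.toMvPolynomial j := by
      rw [← toMvPolynomial_mul_eq_sum_smul, Units.inv_mul, Matrix.toMvPolynomial_one]
    simp only [hX, ← Ideal.Quotient.mkₐ_eq_mk K, map_sum, map_smul]
    exact Submodule.sum_smul_mem _ _ fun j _ => Submodule.subset_span ⟨j, rfl⟩

lemma image_linearForms_of_mk_X {φ : (MvPolynomial n K ⧸ J) ≃ₐ[K] (MvPolynomial n K ⧸ I)}
    {M : GL n K} (hM : ∀ i, φ (Ideal.Quotient.mk J (X i)) =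
      Ideal.Quotient.mk I (M.val.toMvPolynomial i)) :
    φ '' linearForms J = linearForms I := by
  have hmap : (linearForms J).map φ.toLinearMap = linearForms I := by
    rw [← span_range_mk_toMvPolynomial I M, ← funext hM, linearForms, Submodule.map_span,
      ← Set.range_comp]
    rfl
  exact congrArg SetLike.coe hmap

lemma exists_GL_mk_X_of_image_linearForms (hI : I ≤ idealOfVars n K ^ 2)
    {φ : (MvPolynomial n K ⧸ J) ≃ₐ[K] (MvPolynomial n K ⧸ I)}
    (hφ : φ '' linearForms J = linearForms I) :
    ∃ M : GL n K, ∀ i, φ (Ideal.Quotient.mk J (X i)) =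
      Ideal.Quotient.mk I (M.val.toMvPolynomial i) := by
  have hX (I : Ideal (MvPolynomial n K)) (i : n) : Ideal.Quotient.mk I (X i) ∈ linearForms I :=
    Submodule.subset_span ⟨i, rfl⟩
  obtain ⟨M, hM⟩ := forall_mem_linearForms_iff.mp fun i =>
    SetLike.mem_coe.mp (hφ ▸ Set.mem_image_of_mem φ (hX J i))
  obtain ⟨N, hN⟩ := forall_mem_linearForms_iff.mp fun i => show
      φ.symm (Ideal.Quotient.mk I (X i)) ∈ linearForms J by
    obtain ⟨z, hz, hzi⟩ := hφ.ge (hX I i)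
    rwa [← hzi, φ.symm_apply_apply]
  have hNM : N * M = 1 := matrix_eq_of_mk_toMvPolynomial_eq hI fun i => by
    calc Ideal.Quotient.mk I ((N * M).toMvPolynomial i)
        = ∑ j, N i j • Ideal.Quotient.mk I (M.toMvPolynomial j) := by
          simp only [toMvPolynomial_mul_eq_sum_smul, ← Ideal.Quotient.mkₐ_eq_mk K, map_sum,
            map_smul]
      _ = φ (Ideal.Quotient.mk J (N.toMvPolynomial i)) := by
          simp only [← hM, mk_toMvPolynomial J, map_sum, map_smul]
      _ = Ideal.Quotient.mk I (Matrix.toMvPolynomial 1 i) := by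
          rw [← hN, φ.apply_symm_apply, Matrix.toMvPolynomial_one]
  exact ⟨⟨M, N, mul_eq_one_comm.mp hNM, hNM⟩, hM⟩

lemma map_linearSubst_eq_of_mk_X {φ : (MvPolynomial n K ⧸ J) ≃ₐ[K] (MvPolynomial n K ⧸ I)}
    {M : GL n K} (hM : ∀ i, φ (Ideal.Quotient.mk J (X i)) =
      Ideal.Quotient.mk I (M.val.toMvPolynomial i)) :
    J.map (linearSubst M) = I := by
  have hφ : φ.toAlgHom.comp (Ideal.Quotient.mkₐ K J) =
      (Ideal.Quotient.mkₐ K I).comp (linearSubst M).toAlgHom :=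
    algHom_ext fun i => (hM i).trans (congrArg _ (linearSubst_X M i).symm)
  have hJ : J = I.comap (linearSubst M) := by
    ext f
    rw [Ideal.mem_comap, ← Ideal.Quotient.eq_zero_iff_mem, ← Ideal.Quotient.eq_zero_iff_mem,
      ← map_eq_zero_iff φ φ.injective]
    exact Eq.congr_left (DFunLike.congr_fun hφ f)
  rw [hJ, Ideal.map_comap_eq_self_of_equiv]

theorem exists_algEquiv_image_linearForms_iff (hI : I ≤ idealOfVars n K ^ 2) :
    (∃ φ : (MvPolynomial n K ⧸ J) ≃ₐ[K] (MvPolynomial n K ⧸ I),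
      φ '' linearForms J = linearForms I) ↔ ∃ M : GL n K, J.map (linearSubst M) = I := by
  constructor
  · rintro ⟨φ, hφ⟩
    obtain ⟨M, hM⟩ := exists_GL_mk_X_of_image_linearForms hI hφ
    exact ⟨M, map_linearSubst_eq_of_mk_X hM⟩
  · rintro ⟨M, hM⟩
    exact ⟨Ideal.quotientEquivAlg J I (linearSubst M) hM.symm,
      image_linearForms_of_mk_X fun i => congrArg _ (linearSubst_X M i)⟩

end GradedQuotients

section HomogeneousGenerators

variable {K σ : Type*} [CommSemiring K] {d : ℕ} {S : Set (MvPolynomial σ K)}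

lemma ideal_span_le_pow_idealOfVars (hS : ∀ s ∈ S, s.IsHomogeneous d) :
    Ideal.span S ≤ idealOfVars σ K ^ d :=
  Ideal.span_le.mpr fun s hs => (mem_pow_idealOfVars_iff' d s).mpr fun _ hx =>
    (hS s hs).coeff_eq_zero hx.ne

lemma homogeneousComponent_mul_of_isHomogeneous (g : MvPolynomial σ K) {s : MvPolynomial σ K}
    (hs : s.IsHomogeneous d) : homogeneousComponent d (g * s) = coeff 0 g • s := by
  let _ := gradedAlgebra (σ := σ) (R := K)
  have hdecomp := DirectSum.coe_decompose_mul_of_right_mem_of_le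
    (𝒜 := homogeneousSubmodule σ K) (a := g) hs le_rfl
  rw [Nat.sub_self] at hdecomp
  rw [smul_eq_C_mul, ← homogeneousComponent_zero, ← decomposition.decompose'_apply,
    ← decomposition.decompose'_apply]
  exact hdecomp

lemma homogeneousComponent_mem_span (hS : ∀ s ∈ S, s.IsHomogeneous d) {f : MvPolynomial σ K}
    (hf : f ∈ Ideal.span S) : homogeneousComponent d f ∈ Submodule.span K S := by
  induction hf using Submodule.closure_induction with
  | zero => simp only [map_zero, zero_mem]
  | add f g _ _ hf hg => simpa only [map_add] using add_mem hf hg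
  | smul_mem g s hs =>
    rw [smul_eq_mul, homogeneousComponent_mul_of_isHomogeneous g (hS s hs)]
    exact Submodule.smul_mem _ _ (Submodule.subset_span hs)

lemma mem_span_of_isHomogeneous_of_mem_ideal_span (hS : ∀ s ∈ S, s.IsHomogeneous d)
    {f : MvPolynomial σ K} (hf : f.IsHomogeneous d) (hfS : f ∈ Ideal.span S) :
    f ∈ Submodule.span K S :=
  homogeneousComponent_eq_self hf ▸ homogeneousComponent_mem_span hS hfS

end HomogeneousGenerators

/-- The ideal of `K[X]` generated by the squares of the variables. -/
noncomputable def squaresIdeal (σ K : Type*) [CommRing K] : Ideal (MvPolynomial σ K) :=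
  Ideal.span (Set.range fun i => X i ^ 2)

lemma map_linearSubst_squaresIdeal {K n : Type*} [CommRing K] [Fintype n] [DecidableEq n]
    (M : GL n K) : (squaresIdeal n K).map (linearSubst M) =
      Ideal.span (Set.range fun i => M.val.toMvPolynomial i ^ 2) := by
  simp only [squaresIdeal, Ideal.map_span, ← Set.range_comp, Function.comp_def, map_pow,
    linearSubst_X]

lemma eq_zero_of_forall_col_pow_mul_eq_zero {K n : Type*} [CommRing K] [Fintype n] [DecidableEq n]
    (M : GL n K) (j : n) (k : ℕ) {e : K} (h : ∀ i, M.val i j ^ k * e = 0) : e = 0 := by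
  let A : Ideal K := (Ideal.span {e}).annihilator
  have hcol (i : n) : M.val i j ∈ A.radical :=
    ⟨k, (Submodule.mem_annihilator_span_singleton e _).mpr (h i)⟩
  have hone : (1 : K) ∈ A.radical := by
    have hsum : ∑ i, M⁻¹.val j i * M.val i j = 1 := by
      rw [← Matrix.mul_apply, Units.inv_mul, Matrix.one_apply_eq]
    exact hsum ▸ sum_mem fun i _ => A.radical.mul_mem_left _ (hcol i)
  have htop : A = ⊤ := Ideal.radical_eq_top.mp ((Ideal.eq_top_iff_one _).mpr hone)
  simpa using (Submodule.mem_annihilator_span_singleton e 1).mp ((Ideal.eq_top_iff_one A).mp htop)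

section BottIdeal

variable {K m : Type*} [CommRing K] {a b c : K}

/-- The relations `y₁²`, `y₂(a y₁ + y₂)` and `y₃(b y₁ + c y₂ + y₃)` in the cohomology ring of a
3-stage Bott manifold, with coefficients in an arbitrary commutative ring. -/
def bottRelations (a b c : K) : Set (MvPolynomial (Fin 3) K) :=
  {X 0 ^ 2, X 1 * (C a * X 0 + X 1), X 2 * (C b * X 0 + C c * X 1 + X 2)}

/-- The ideal generated by `bottRelations`, so that `bott3Ideal a b c` is the case of integers
`a`, `b`, `c` in the ring `ℚ`. -/
noncomputable def bottIdeal (a b c : K) : Ideal (MvPolynomial (Fin 3) K) :=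
  Ideal.span (bottRelations a b c)

lemma isHomogeneous_of_mem_bottRelations {f : MvPolynomial (Fin 3) K}
    (hf : f ∈ bottRelations a b c) : f.IsHomogeneous 2 := by
  have hX := isHomogeneous_X (σ := Fin 3) K
  rcases hf with rfl | rfl | rfl
  · exact (hX 0).pow 2
  · exact (hX 1).mul (((hX 0).C_mul a).add (hX 1))
  · exact (hX 2).mul ((((hX 0).C_mul b).add ((hX 1).C_mul c)).add (hX 2))

lemma bottIdeal_le_idealOfVars_sq : bottIdeal a b c ≤ idealOfVars (Fin 3) K ^ 2 :=
  ideal_span_le_pow_idealOfVars fun _ => isHomogeneous_of_mem_bottRelations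

lemma toMvPolynomial_sq_eq {M : Matrix m (Fin 3) K} {i : m}
    (h₀₁ : 2 * M i 0 * M i 1 = a * M i 1 ^ 2) (h₀₂ : 2 * M i 0 * M i 2 = b * M i 2 ^ 2)
    (h₁₂ : 2 * M i 1 * M i 2 = c * M i 2 ^ 2) :
    M.toMvPolynomial i ^ 2 = C (M i 0) ^ 2 * X 0 ^ 2 +
      C (M i 1) ^ 2 * (X 1 * (C a * X 0 + X 1)) +
      C (M i 2) ^ 2 * (X 2 * (C b * X 0 + C c * X 1 + X 2)) := by
  replace h₀₁ := congrArg (C (σ := Fin 3)) h₀₁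
  replace h₀₂ := congrArg (C (σ := Fin 3)) h₀₂
  replace h₁₂ := congrArg (C (σ := Fin 3)) h₁₂
  simp only [C_mul, C_pow, map_ofNat] at h₀₁ h₀₂ h₁₂
  simp only [toMvPolynomial_eq_sum_smul_X, smul_eq_C_mul, Fin.sum_univ_three]
  linear_combination X 0 * X 1 * h₀₁ + X 0 * X 2 * h₀₂ + X 1 * X 2 * h₁₂

lemma toMvPolynomial_sq_mem_bottIdeal_iff {M : Matrix m (Fin 3) K} {i : m} :
    M.toMvPolynomial i ^ 2 ∈ bottIdeal a b c ↔ 2 * M i 0 * M i 1 = a * M i 1 ^ 2 ∧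
      2 * M i 0 * M i 2 = b * M i 2 ^ 2 ∧ 2 * M i 1 * M i 2 = c * M i 2 ^ 2 := by
  constructor
  · intro h
    obtain ⟨α, β, γ, hsq⟩ := Submodule.mem_span_triple.mp
      (mem_span_of_isHomogeneous_of_mem_ideal_span (fun _ => isHomogeneous_of_mem_bottRelations)
        ((M.toMvPolynomial_isHomogeneous i).pow 2) h)
    have heval (v : Fin 3 → K) : α * v 0 ^ 2 + β * (v 1 * (a * v 0 + v 1)) +
        γ * (v 2 * (b * v 0 + c * v 1 + v 2)) = (M i 0 * v 0 + M i 1 * v 1 + M i 2 * v 2) ^ 2 := by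
      simpa only [toMvPolynomial_eq_sum_smul_X, Fin.sum_univ_three, smul_eval, map_add, map_mul,
        map_pow, eval_X, eval_C] using congrArg (eval v) hsq
    have hα : α = M i 0 ^ 2 := by simpa using heval ![1, 0, 0]
    have hβ : β = M i 1 ^ 2 := by simpa using heval ![0, 1, 0]
    have hγ : γ = M i 2 ^ 2 := by simpa using heval ![0, 0, 1]
    have h₀₁ : α + β * (a + 1) = (M i 0 + M i 1) ^ 2 := by simpa using heval ![1, 1, 0]
    have h₀₂ : α + γ * (b + 1) = (M i 0 + M i 2) ^ 2 := by simpa using heval ![1, 0, 1]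
    have h₁₂ : β + γ * (c + 1) = (M i 1 + M i 2) ^ 2 := by simpa using heval ![0, 1, 1]
    subst hα hβ hγ
    exact ⟨by linear_combination -h₀₁, by linear_combination -h₀₂, by linear_combination -h₁₂⟩
  · rintro ⟨h₀₁, h₀₂, h₁₂⟩
    rw [toMvPolynomial_sq_eq h₀₁ h₀₂ h₁₂]
    refine add_mem (add_mem ?_ ?_) ?_ <;>
      exact Ideal.mul_mem_left _ _ (Ideal.subset_span (by simp [bottRelations]))

lemma pow_mul_eq_zero_of_toMvPolynomial_sq_mem_bottIdeal {M : Matrix m (Fin 3) K} {i : m}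
    (h : M.toMvPolynomial i ^ 2 ∈ bottIdeal a b c) : M i 2 ^ 4 * (c * (2 * b - a * c)) = 0 := by
  obtain ⟨h₀₁, h₀₂, h₁₂⟩ := toMvPolynomial_sq_mem_bottIdeal_iff.mp h
  calc M i 2 ^ 4 * (c * (2 * b - a * c))
      = 2 * (b * M i 2 ^ 2) * (c * M i 2 ^ 2) - a * (c * M i 2 ^ 2) ^ 2 := by ring
    _ = 2 * (2 * M i 0 * M i 2) * (2 * M i 1 * M i 2) - a * (2 * M i 1 * M i 2) ^ 2 := by
        rw [h₀₂, h₁₂]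
    _ = 4 * M i 2 ^ 2 * (2 * M i 0 * M i 1 - a * M i 1 ^ 2) := by ring
    _ = 0 := by rw [h₀₁, sub_self, mul_zero]

variable [Invertible (2 : K)]

/-- The coordinates of the linear forms `y₁`, `(a/2) y₁ + y₂` and `(b/2) y₁ + (c/2) y₂ + y₃`,
obtained by completing the squares in `bottRelations`. -/
noncomputable def completedSquares (a b c : K) : GL (Fin 3) K :=
  Matrix.GeneralLinearGroup.mk'' !![1, 0, 0; ⅟2 * a, 1, 0; ⅟2 * b, ⅟2 * c, 1]
    (by simp [Matrix.det_fin_three])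

lemma completedSquares_val (a b c : K) : (completedSquares a b c).val =
    !![1, 0, 0; ⅟2 * a, 1, 0; ⅟2 * b, ⅟2 * c, 1] :=
  rfl

lemma completedSquares_relations (h : c * (2 * b - a * c) = 0) (i : Fin 3) :
    let M := (completedSquares a b c).val
    2 * M i 0 * M i 1 = a * M i 1 ^ 2 ∧ 2 * M i 0 * M i 2 = b * M i 2 ^ 2 ∧
      2 * M i 1 * M i 2 = c * M i 2 ^ 2 := by
  have hbc : b * (⅟2 * c) = a * (⅟2 * c) ^ 2 := by
    linear_combination ⅟(2 : K) ^ 2 * h - b * c * ⅟2 * mul_invOf_self (2 : K)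
  fin_cases i <;> simp [completedSquares_val, hbc]

lemma toMvPolynomial_completedSquares_sq (h : c * (2 * b - a * c) = 0) (i : Fin 3) :
    (completedSquares a b c).val.toMvPolynomial i ^ 2 =
      ![X 0 ^ 2,
        C (⅟2 * a) ^ 2 * X 0 ^ 2 + X 1 * (C a * X 0 + X 1),
        C (⅟2 * b) ^ 2 * X 0 ^ 2 + C (⅟2 * c) ^ 2 * (X 1 * (C a * X 0 + X 1)) +
          X 2 * (C b * X 0 + C c * X 1 + X 2)] i := by
  obtain ⟨h₀₁, h₀₂, h₁₂⟩ := completedSquares_relations h i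
  rw [toMvPolynomial_sq_eq h₀₁ h₀₂ h₁₂]
  fin_cases i <;> simp [completedSquares_val]

lemma span_completedSquares_sq (h : c * (2 * b - a * c) = 0) :
    Ideal.span (Set.range fun i => (completedSquares a b c).val.toMvPolynomial i ^ 2) =
      bottIdeal a b c := by
  apply le_antisymm
  · rw [Ideal.span_le]
    rintro _ ⟨i, rfl⟩
    exact toMvPolynomial_sq_mem_bottIdeal_iff.mpr (completedSquares_relations h i)
  · set S := Ideal.span (Set.range fun i => (completedSquares a b c).val.toMvPolynomial i ^ 2)
    have hmem (i : Fin 3) := toMvPolynomial_completedSquares_sq h i ▸ (Ideal.subset_span ⟨i, rfl⟩ :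
      (completedSquares a b c).val.toMvPolynomial i ^ 2 ∈ S)
    have h₀ : X 0 ^ 2 ∈ S := hmem 0
    have h₁ : X 1 * (C a * X 0 + X 1) ∈ S :=
      (Ideal.add_mem_iff_right S (S.mul_mem_left _ h₀)).mp (hmem 1)
    have h₂ : X 2 * (C b * X 0 + C c * X 1 + X 2) ∈ S :=
      (Ideal.add_mem_iff_right S (add_mem (S.mul_mem_left _ h₀) (S.mul_mem_left _ h₁))).mp (hmem 2)
    rw [bottIdeal, Ideal.span_le]
    rintro _ (rfl | rfl | rfl) <;> assumption

theorem exists_map_linearSubst_squaresIdeal_eq_bottIdeal_iff :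
    (∃ M : GL (Fin 3) K, (squaresIdeal (Fin 3) K).map (linearSubst M) = bottIdeal a b c) ↔
      c * (2 * b - a * c) = 0 := by
  simp only [map_linearSubst_squaresIdeal]
  constructor
  · rintro ⟨M, hM⟩
    exact eq_zero_of_forall_col_pow_mul_eq_zero M 2 4 fun i =>
      pow_mul_eq_zero_of_toMvPolynomial_sq_mem_bottIdeal (hM.le (Ideal.subset_span ⟨i, rfl⟩))
  · exact fun h => ⟨completedSquares a b c, span_completedSquares_sq h⟩

end BottIdeal

theorem stmt16_general {K : Type*} [CommRing K] [Invertible (2 : K)] (a b c : K) :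
    (∃ φ : (MvPolynomial (Fin 3) K ⧸ squaresIdeal (Fin 3) K) ≃ₐ[K]
        (MvPolynomial (Fin 3) K ⧸ bottIdeal a b c),
      φ '' linearForms (squaresIdeal (Fin 3) K) = linearForms (bottIdeal a b c)) ↔
    c * (2 * b - a * c) = 0 :=
  (exists_algEquiv_image_linearForms_iff bottIdeal_le_idealOfVars_sq).trans
    exists_map_linearSubst_squaresIdeal_eq_bottIdeal_iff

/-- equivalence (1) ⇔ (3) of Lemma 7.2: the rational cohomology ring of
a 3-stage Bott manifold is isomorphic, as a graded ℚ-algebra, to that of `(ℂP¹)³` if and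
only if `c(2b − ac) = 0`. -/
theorem stmt16 (a b c : ℤ) :
    (∃ φ : (MvPolynomial (Fin 3) ℚ ⧸ cubeIdeal) ≃ₐ[ℚ]
        (MvPolynomial (Fin 3) ℚ ⧸ bott3Ideal a b c),
      φ '' (Submodule.span ℚ
          (Set.range fun i => Ideal.Quotient.mk cubeIdeal (X i)) :
            Set (MvPolynomial (Fin 3) ℚ ⧸ cubeIdeal)) =
        (Submodule.span ℚ
          (Set.range fun i => Ideal.Quotient.mk (bott3Ideal a b c) (X i)) :
            Set (MvPolynomial (Fin 3) ℚ ⧸ bott3Ideal a b c))) ↔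
    c * (2 * b - a * c) = 0 :=
  stmt16_general (a : ℚ) b c |>.trans <| by norm_cast
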